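/- Let I be a proper ideal of a valuation domain R, let P = √I, and let n be a positive integer. Then I is an n-semiprimary ideal of R if and only if P^n ⊆ I. -/

import Mathlib

/-- A proper ideal `I` of a commutative ring `R` is an `n`-semiprimary ideal of `R` if
whenever `x^n * y^n ∈ I` for `x, y ∈ R`, then `x^n ∈ I` or `y^n ∈ I`. -/
def IsNSemiprimary {R : Type*} [CommRing R] (I : Ideal R) (n : ℕ) : Prop :=
  I ≠ ⊤ ∧ ∀ x y : R, x ^ n * y ^ n ∈ I → x ^ n ∈ I ∨ y ^ n ∈ I

/-!
Over any commutative ring, `I` is `n`-semiprimary exactly when `√I` is prime and `I` contains the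
`n`-th power of every element of `√I`. In a chained ring (`PreValuationRing`) every proper radical
ideal is prime: if `x ∣ y` and `x * y` lies in it, then so does `y ^ 2`. Moreover, each element of
`P ^ n` is a multiple of a single `x ^ n` with `x ∈ P`, since finitely many elements of `P` have a
common divisor in `P`. Hence `P ^ n ≤ I` only has to be tested on `n`-th powers.
-/

section Bezout

variable {R : Type*} [CommRing R] [IsBezout R] {I P : Ideal R}

theorem exists_mem_dvd_dvd_of_mem {x y : R} (hx : x ∈ P) (hy : y ∈ P) :
    ∃ g ∈ P, g ∣ x ∧ g ∣ y := by
  obtain ⟨a, b, hab⟩ := IsBezout.gcd_eq_sum x y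
  have hgcd : IsBezout.gcd x y ∈ P :=
    hab ▸ P.add_mem (P.mul_mem_left a hx) (P.mul_mem_left b hy)
  exact ⟨_, hgcd, IsBezout.gcd_dvd_left x y, IsBezout.gcd_dvd_right x y⟩

theorem mem_ideal_pow_iff_exists_pow_dvd {n : ℕ} {z : R} :
    z ∈ P ^ n ↔ ∃ x ∈ P, x ^ n ∣ z := by
  refine ⟨fun hz ↦ ?_, fun ⟨x, hx, hxz⟩ ↦ Ideal.mem_of_dvd _ hxz (Ideal.pow_mem_pow hx n)⟩
  induction hz using Submodule.pow_induction_on_left' with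
  | algebraMap r => exact ⟨0, P.zero_mem, by simp⟩
  | add a b i _ _ iha ihb =>
    obtain ⟨x, hx, hxa⟩ := iha
    obtain ⟨y, hy, hyb⟩ := ihb
    obtain ⟨g, hg, hgx, hgy⟩ := exists_mem_dvd_dvd_of_mem hx hy
    exact ⟨g, hg, dvd_add ((pow_dvd_pow_of_dvd hgx i).trans hxa)
      ((pow_dvd_pow_of_dvd hgy i).trans hyb)⟩
  | mem_mul y hy i a _ iha =>
    obtain ⟨x, hx, hxa⟩ := iha
    obtain ⟨g, hg, hgx, hgy⟩ := exists_mem_dvd_dvd_of_mem hx hy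
    exact ⟨g, hg, pow_succ' g i ▸ mul_dvd_mul hgy ((pow_dvd_pow_of_dvd hgx i).trans hxa)⟩

theorem ideal_pow_le_iff_forall_pow_mem {n : ℕ} : P ^ n ≤ I ↔ ∀ x ∈ P, x ^ n ∈ I := by
  refine ⟨fun h x hx ↦ h (Ideal.pow_mem_pow hx n), fun h z hz ↦ ?_⟩
  obtain ⟨x, hx, hxz⟩ := mem_ideal_pow_iff_exists_pow_dvd.mp hz
  exact Ideal.mem_of_dvd I hxz (h x hx)

end Bezout

theorem isBezout_of_preValuationRing {R : Type*} [CommRing R] [PreValuationRing R] :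
    IsBezout R := by
  refine IsBezout.iff_span_pair_isPrincipal.mpr fun x y ↦ ?_
  rcases ValuationRing.dvd_total x y with hxy | hyx
  · exact ⟨x, Ideal.span_pair_eq_span_left_iff_dvd.mpr hxy⟩
  · exact ⟨y, Ideal.span_pair_eq_span_right_iff_dvd.mpr hyx⟩

theorem isPrime_of_isRadical_of_preValuationRing {R : Type*} [CommSemiring R]
    [PreValuationRing R] {J : Ideal R} (hJ : J.IsRadical) (hJ_ne : J ≠ ⊤) : J.IsPrime where
  ne_top' := hJ_ne
  mem_or_mem' {x y} hxy := by
    rcases ValuationRing.dvd_total x y with hdvd | hdvd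
    · exact .inr (hJ ⟨2, sq y ▸ J.mem_of_dvd (mul_dvd_mul_right hdvd y) hxy⟩)
    · exact .inl (hJ ⟨2, sq x ▸ J.mem_of_dvd (mul_dvd_mul_left x hdvd) hxy⟩)

namespace IsNSemiprimary

variable {R : Type*} [CommRing R] {I : Ideal R} {n : ℕ}

theorem pow_mem_of_pow_pow_mem (h : IsNSemiprimary I n) {x : R} {m : ℕ}
    (hx : (x ^ m) ^ n ∈ I) : x ^ n ∈ I := by
  induction m with
  | zero => exact absurd (I.eq_top_iff_one.mpr (by simpa using hx)) h.1
  | succ m ih =>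
    rw [pow_succ, mul_pow] at hx
    exact (h.2 _ _ hx).elim ih id

theorem pow_mem_of_mem_radical (h : IsNSemiprimary I n) (hn : 0 < n) {x : R}
    (hx : x ∈ I.radical) : x ^ n ∈ I := by
  obtain ⟨m, hm⟩ := hx
  exact h.pow_mem_of_pow_pow_mem (I.pow_mem_of_mem hm n hn)

theorem isPrime_radical (h : IsNSemiprimary I n) (hn : 0 < n) : I.radical.IsPrime where
  ne_top' := mt Ideal.radical_eq_top.mp h.1
  mem_or_mem' {x y} hxy :=
    (h.2 x y (mul_pow x y n ▸ h.pow_mem_of_mem_radical hn hxy)).imp (⟨n, ·⟩) (⟨n, ·⟩)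

end IsNSemiprimary

theorem isNSemiprimary_iff_isPrime_radical_and_forall_pow_mem {R : Type*} [CommRing R]
    {I : Ideal R} {n : ℕ} (hn : 0 < n) :
    IsNSemiprimary I n ↔ I.radical.IsPrime ∧ ∀ x ∈ I.radical, x ^ n ∈ I := by
  refine ⟨fun h ↦ ⟨h.isPrime_radical hn, fun _ ↦ h.pow_mem_of_mem_radical hn⟩, ?_⟩
  rintro ⟨hprime, hpow⟩
  refine ⟨mt Ideal.radical_eq_top.mpr hprime.ne_top, fun x y hxy ↦ ?_⟩
  have hmem : x * y ∈ I.radical := ⟨n, by rwa [mul_pow]⟩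
  exact (hprime.mem_or_mem hmem).imp (hpow x) (hpow y)

theorem isNSemiprimary_iff_isPrime_radical_and_radical_pow_le {R : Type*} [CommRing R]
    [IsBezout R] {I : Ideal R} {n : ℕ} (hn : 0 < n) :
    IsNSemiprimary I n ↔ I.radical.IsPrime ∧ I.radical ^ n ≤ I := by
  rw [isNSemiprimary_iff_isPrime_radical_and_forall_pow_mem hn, ideal_pow_le_iff_forall_pow_mem]

theorem isNSemiprimary_iff_radical_pow_le_of_valuationRing_general {R : Type*} [CommRing R]
    [PreValuationRing R] (I : Ideal R) (hI : I ≠ ⊤) (n : ℕ) (hn : 0 < n) :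
    IsNSemiprimary I n ↔ I.radical ^ n ≤ I := by
  have : IsBezout R := isBezout_of_preValuationRing
  have hprime : I.radical.IsPrime :=
    isPrime_of_isRadical_of_preValuationRing I.radical_isRadical (mt Ideal.radical_eq_top.mp hI)
  rw [isNSemiprimary_iff_isPrime_radical_and_radical_pow_le hn, and_iff_right hprime]

/-- Let `I` be a proper ideal of a valuation domain `R`, let `P = √I`, and let `n` be a
positive integer. Then `I` is an `n`-semiprimary ideal of `R` if and only if `P^n ⊆ I`. -/
theorem isNSemiprimary_iff_radical_pow_le_of_valuationRing {R : Type*} [CommRing R]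
    [IsDomain R] [ValuationRing R] (I : Ideal R) (hI : I ≠ ⊤) (n : ℕ) (hn : 0 < n) :
    IsNSemiprimary I n ↔ I.radical ^ n ≤ I :=
  isNSemiprimary_iff_radical_pow_le_of_valuationRing_general I hI n hn
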